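/- Fix an integer k ≥ 2 and a real t ∈ (0,1). For n ≥ 0 define g_n(φ) = B̃_{φ,t,k}^n(φ) and, for n ≥ 1, ĝ_n(φ) = B̃_{φ,t,k+1}(B̃_{φ,t,k}^{n−1}(φ)). For real φ_1 < φ_2 let N_n(φ_1,φ_2) = #{φ ∈ (φ_1, φ_2] : g_n(φ) ∈ π + 2πℤ} and N̂_n(φ_1,φ_2) = #{φ ∈ (φ_1, φ_2] : ĝ_n(φ) ∈ π + 2πℤ}. If every φ ∈ [φ_1, φ_2] is such that (e^{iφ}, t) lies below the φ_e curve, then lim_{n→∞} [ (k−1)/(k^{n+1} − 1) · N_n(φ_1,φ_2) − (k−1)/((k+1)·k^n − 2) · N̂_n(φ_1,φ_2) ] = 0; that is, the rooted and the full Cayley tree have the same limiting distribution of Lee–Yang zeros. -/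

import Mathlib

/-- The Blaschke product `B_{z,t,k}(w) = z·((w + t)/(1 + w·t))^k`. -/
noncomputable def Blaschke (z : ℂ) (t : ℝ) (k : ℕ) (w : ℂ) : ℂ :=
  z * ((w + (t : ℂ)) / (1 + w * (t : ℂ))) ^ k

/-- The root with nonnegative imaginary part of the quadratic
`t·w² + ((k+1)·t² − (k−1))·w + t = 0` (for `t_c ≤ t < 1` the discriminant
`(k+1)²t⁴ − 2(k²+1)t² + (k−1)²` is `≤ 0`, so the root is
`(−b + i·√(−disc))/(2t)` with `b = (k+1)t² − (k−1)`). -/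
noncomputable def wbullet (k : ℕ) (t : ℝ) : ℂ :=
  (-((((k : ℂ)) + 1) * (t : ℂ)^2 - ((k : ℂ) - 1)) +
    Complex.I * ((Real.sqrt (-(((k : ℝ) + 1)^2 * t^4 - 2 * ((k : ℝ)^2 + 1) * t^2 +
      ((k : ℝ) - 1)^2)) : ℝ) : ℂ)) / (2 * (t : ℂ))

/-- The edge angle `φ_e(t) = Arg(w_•(t)·((1 + w_•(t)·t)/(w_•(t) + t))^k)`. -/
noncomputable def phie (k : ℕ) (t : ℝ) : ℝ :=
  (wbullet k t * ((1 + wbullet k t * (t : ℂ)) / (wbullet k t + (t : ℂ))) ^ k).arg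

/-- `(z,t)` lies below the `φ_e` curve: either `0 ≤ t < t_c`, or
`t_c ≤ t < 1` and `φ_e(t) < |Arg z| ≤ π`. -/
def belowCurve (k : ℕ) (t : ℝ) (z : ℂ) : Prop :=
  (0 ≤ t ∧ t < ((k : ℝ) - 1) / ((k : ℝ) + 1)) ∨
  (((k : ℝ) - 1) / ((k : ℝ) + 1) ≤ t ∧ t < 1 ∧ phie k t < |z.arg| ∧ |z.arg| ≤ Real.pi)

/-- The lift of the Blaschke product `B_{e^{iφ},t,k}` to `ℝ`:
`B̃_{φ,t,k}(θ) = k·θ − 2k·arctan(t·sin θ/(1 + t·cos θ)) + φ`. -/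
noncomputable def Blift (φ t : ℝ) (k : ℕ) (θ : ℝ) : ℝ :=
  (k : ℝ) * θ - 2 * (k : ℝ) * Real.arctan (t * Real.sin θ / (1 + t * Real.cos θ)) + φ

noncomputable def hlift (t θ : ℝ) : ℝ :=
  θ - 2 * Real.arctan (t * Real.sin θ / (1 + t * Real.cos θ))

lemma den_pos {t : ℝ} (ht0 : 0 < t) (ht1 : t < 1) (θ : ℝ) : 0 < 1 + t * Real.cos θ := by
  nlinarith [Real.neg_one_le_cos θ]

lemma Blift_eq (φ t : ℝ) (k : ℕ) (θ : ℝ) : Blift φ t k θ = k * hlift t θ + φ := by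
  unfold Blift hlift; ring

lemma hlift_deriv {t : ℝ} (ht0 : 0 < t) (ht1 : t < 1) (θ : ℝ) :
    HasDerivAt (hlift t) ((1 - t ^ 2) / ((1 + t * Real.cos θ) ^ 2 + (t * Real.sin θ) ^ 2)) θ := by
  have hd := den_pos ht0 ht1 θ
  have h1 : HasDerivAt (fun x => t * Real.sin x) (t * Real.cos θ) θ :=
    (Real.hasDerivAt_sin θ).const_mul t
  have h2 : HasDerivAt (fun x => 1 + t * Real.cos x) (t * -Real.sin θ) θ :=
    ((Real.hasDerivAt_cos θ).const_mul t).const_add 1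
  have h3 := (h1.fun_div h2 hd.ne').arctan
  have h4 := (hasDerivAt_id θ).fun_sub (h3.const_mul 2)
  unfold hlift
  refine h4.congr_deriv ?_
  have hs := Real.sin_sq_add_cos_sq θ
  have hp : 0 < (1 + t * Real.cos θ) ^ 2 + (t * Real.sin θ) ^ 2 := by positivity
  have e : 1 + (t * Real.sin θ / (1 + t * Real.cos θ)) ^ 2 =
      ((1 + t * Real.cos θ) ^ 2 + (t * Real.sin θ) ^ 2) / (1 + t * Real.cos θ) ^ 2 := by
    field_simp
  rw [e]
  generalize hP : (1 + t * Real.cos θ) ^ 2 + (t * Real.sin θ) ^ 2 = P at *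
  have hne := hd.ne'
  field_simp
  subst hP
  linear_combination (-t ^ 2) * hs

lemma hlift_strictMono {t : ℝ} (ht0 : 0 < t) (ht1 : t < 1) : StrictMono (hlift t) := by
  apply strictMono_of_deriv_pos
  intro θ
  rw [(hlift_deriv ht0 ht1 θ).deriv]
  have hd := den_pos ht0 ht1 θ
  have : 0 < 1 - t ^ 2 := by nlinarith
  positivity

lemma hlift_cont {t : ℝ} (ht0 : 0 < t) (ht1 : t < 1) : Continuous (hlift t) :=
  continuous_iff_continuousAt.2 fun θ => (hlift_deriv ht0 ht1 θ).continuousAt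

lemma hlift_bound (t θ : ℝ) : |hlift t θ| ≤ |θ| + Real.pi := by
  unfold hlift
  have h1 := Real.neg_pi_div_two_lt_arctan (t * Real.sin θ / (1 + t * Real.cos θ))
  have h2 := Real.arctan_lt_pi_div_two (t * Real.sin θ / (1 + t * Real.cos θ))
  rw [abs_le]
  constructor <;> linarith [le_abs_self θ, neg_abs_le θ]

noncomputable def Gn (t : ℝ) (k n : ℕ) (φ : ℝ) : ℝ := (Blift φ t k)^[n] φ

lemma Gn_succ (t : ℝ) (k n : ℕ) (φ : ℝ) : Gn t k (n + 1) φ = k * hlift t (Gn t k n φ) + φ := by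
  unfold Gn; rw [Function.iterate_succ_apply', Blift_eq]

lemma Gn_mono {t : ℝ} (ht0 : 0 < t) (ht1 : t < 1) (k n : ℕ) :
    StrictMono (Gn t k n) ∧ Continuous (Gn t k n) := by
  induction n with
  | zero => exact ⟨strictMono_id, continuous_id⟩
  | succ n ih =>
    have : Gn t k (n + 1) = fun φ => k * hlift t (Gn t k n φ) + φ := funext (Gn_succ t k n)
    rw [this]
    refine ⟨fun a b hab => ?_, ?_⟩
    · have := mul_le_mul_of_nonneg_left ((hlift_strictMono ht0 ht1).monotone (ih.1 hab).le)
        (Nat.cast_nonneg (α := ℝ) k)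
      simp only; linarith
    · have := (hlift_cont ht0 ht1).comp ih.2
      exact (continuous_const.mul this).add continuous_id

lemma Gn_bound {t : ℝ} (k : ℕ) (hk : 2 ≤ k) (φ : ℝ) (n : ℕ) :
    |Gn t k n φ| + (k * Real.pi + |φ|) ≤ (k : ℝ) ^ n * (|φ| + (k * Real.pi + |φ|)) := by
  have hk' : (2 : ℝ) ≤ k := by exact_mod_cast hk
  induction n with
  | zero => simp [Gn]
  | succ n ih =>
    rw [Gn_succ, pow_succ]
    have h1 := abs_add_le (k * hlift t (Gn t k n φ)) φ
    rw [abs_mul, Nat.abs_cast] at h1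
    have h2 := mul_le_mul_of_nonneg_left (hlift_bound t (Gn t k n φ)) (by linarith : (0:ℝ) ≤ k)
    have h3 := mul_le_mul_of_nonneg_left ih (by linarith : (0:ℝ) ≤ k)
    have hE : 0 ≤ k * Real.pi + |φ| := by positivity
    nlinarith

lemma count_bound (f : ℝ → ℝ) (hf : StrictMono f) (hc : Continuous f) (a b : ℝ) (hab : a < b) :
    |(({φ ∈ Set.Ioc a b | ∃ m : ℤ, f φ = Real.pi + 2 * Real.pi * m}).ncard : ℝ)
      - (f b - f a) / (2 * Real.pi)| ≤ 1 := by
  have hpi := Real.pi_pos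
  set u : ℝ → ℝ := fun φ => (f φ - Real.pi) / (2 * Real.pi) with hu
  have um : StrictMono u := fun x y h => by
    simp only [hu]; have := hf h; gcongr
  have uc : Continuous u := by fun_prop
  have key : u '' {φ ∈ Set.Ioc a b | ∃ m : ℤ, f φ = Real.pi + 2 * Real.pi * m} =
      (fun m : ℤ => (m : ℝ)) '' (Set.Ioc ⌊u a⌋ ⌊u b⌋) := by
    have hiff : ∀ φ (m : ℤ), f φ = Real.pi + 2 * Real.pi * m ↔ (m : ℝ) = u φ := by
      intro φ m
      simp only [hu]
      rw [eq_div_iff (by positivity)]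
      constructor <;> intro h <;> linarith
    ext y
    constructor
    · rintro ⟨φ, ⟨hφ, m, hm⟩, rfl⟩
      rw [hiff] at hm
      refine ⟨m, ⟨Int.floor_lt.2 ?_, Int.le_floor.2 ?_⟩, hm⟩
      · rw [hm]; exact um hφ.1
      · rw [hm]; exact um.monotone hφ.2
    · rintro ⟨m, ⟨h1, h2⟩, rfl⟩
      rw [Int.floor_lt] at h1
      rw [Int.le_floor] at h2
      obtain ⟨φ, hφ, he⟩ := intermediate_value_Ioc hab.le uc.continuousOn ⟨h1, h2⟩
      exact ⟨φ, ⟨hφ, m, (hiff φ m).2 he.symm⟩, he⟩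
  rw [← Set.ncard_image_of_injective _ um.injective, key,
    Set.ncard_image_of_injective _ Int.cast_injective,
    ← Finset.coe_Ioc, Set.ncard_coe_finset, Int.card_Ioc]
  have hle : ⌊u a⌋ ≤ ⌊u b⌋ := Int.floor_mono (um hab).le
  have : (((⌊u b⌋ - ⌊u a⌋).toNat : ℕ) : ℝ) = (⌊u b⌋ : ℝ) - ⌊u a⌋ := by
    have h : (((⌊u b⌋ - ⌊u a⌋).toNat : ℕ) : ℤ) = ⌊u b⌋ - ⌊u a⌋ := Int.toNat_of_nonneg (by omega)
    exact_mod_cast h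
  rw [this]
  have hd : (f b - f a) / (2 * Real.pi) = u b - u a := by simp only [hu]; ring
  rw [hd, abs_le]
  constructor <;> linarith [Int.floor_le (u a), Int.floor_le (u b), Int.lt_floor_add_one (u a),
    Int.lt_floor_add_one (u b)]

lemma final_bound (k X N M Δ δ C p : ℝ) (hk : 2 ≤ k) (hX : 1 ≤ X) (hδ : 0 ≤ δ) (hp : 1 ≤ p)
    (hΔ : |Δ| ≤ C * X) (hN : |N - Δ / p| ≤ 1)
    (hM : |M - ((k + 1) / k * (Δ - δ) + δ) / p| ≤ 1) :
    |(k - 1) / (k * X - 1) * N - (k - 1) / ((k + 1) * X - 2) * M| ≤ (C + 2 + δ) / X := by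
  have hP : 0 < k * X - 1 := by nlinarith
  have hQ : 0 < (k + 1) * X - 2 := by nlinarith
  set A := (k - 1) / (k * X - 1) with hA
  set B := (k - 1) / ((k + 1) * X - 2) with hB
  have hX0 : 0 < X := by linarith
  have hA0 : 0 ≤ A := div_nonneg (by linarith) hP.le
  have hB0 : 0 ≤ B := div_nonneg (by linarith) hQ.le
  have hA1 : A ≤ 1 / X := by rw [hA, div_le_div_iff₀ hP hX0]; nlinarith
  have hB1 : B ≤ 1 / X := by rw [hB, div_le_div_iff₀ hQ hX0]; nlinarith
  have hAB : A - B * ((k + 1) / k) = - (A * B / k) := by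
    have h1 : A * (k * X - 1) = k - 1 := div_mul_cancel₀ _ hP.ne'
    have h2 : B * ((k + 1) * X - 2) = k - 1 := div_mul_cancel₀ _ hQ.ne'
    have hk0 : k ≠ 0 := by linarith
    have hc : k - 1 ≠ 0 := by linarith
    clear_value A B
    have : k * A - (k + 1) * B = - (A * B) := by
      apply mul_left_cancel₀ hc
      linear_combination (-k * A) * h2 + (k + 1) * B * h1
    field_simp
    linear_combination this
  have hk0 : k ≠ 0 := by linarith
  have hp0 : p ≠ 0 := by linarith
  have e : A * N - B * M = (-(A * B / k)) * (Δ / p) + A * (N - Δ / p)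
      - B * (M - ((k + 1) / k * (Δ - δ) + δ) / p) + B * (δ / (k * p)) := by
    rw [← hAB]; field_simp; ring
  have t2 : |A * (N - Δ / p)| ≤ 1 / X := by
    rw [abs_mul, abs_of_nonneg hA0]
    calc _ ≤ A * 1 := by gcongr
      _ ≤ _ := by linarith
  have t3 : |B * (M - ((k + 1) / k * (Δ - δ) + δ) / p)| ≤ 1 / X := by
    rw [abs_mul, abs_of_nonneg hB0]
    calc _ ≤ B * 1 := by gcongr
      _ ≤ _ := by linarith
  have t4 : |B * (δ / (k * p))| ≤ 1 / X * δ := by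
    rw [abs_of_nonneg (by positivity)]
    have : δ / (k * p) ≤ δ := div_le_self hδ (by nlinarith)
    gcongr
  have t1 : |(-(A * B / k)) * (Δ / p)| ≤ (1 / X) * C := by
    rw [abs_mul, abs_neg, abs_of_nonneg (by positivity), abs_div, abs_of_pos (by linarith : 0 < p)]
    have h1 : A * B / k ≤ 1 / X * (1 / X) := by
      refine (div_le_self (by positivity) (by linarith)).trans ?_
      gcongr
    have h2 : |Δ| / p ≤ C * X := (div_le_self (abs_nonneg _) hp).trans hΔ
    calc _ ≤ 1 / X * (1 / X) * (C * X) := by gcongr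
      _ = _ := by field_simp
  rw [e]
  have : (C + 2 + δ) / X = 1 / X * C + 1 / X + 1 / X + 1 / X * δ := by ring
  rw [this]
  rw [abs_le] at *
  constructor <;> linarith [t1.1, t1.2, t2.1, t2.2, t3.1, t3.2, t4.1, t4.2]

theorem stmt16 (k : ℕ) (hk : 2 ≤ k) (t : ℝ) (ht0 : 0 < t) (ht1 : t < 1)
    (φ1 φ2 : ℝ) (hφ12 : φ1 < φ2)
    (hbc : ∀ φ ∈ Set.Icc φ1 φ2, belowCurve k t (Complex.exp ((φ : ℂ) * Complex.I))) :
    Filter.Tendsto (fun n : ℕ =>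
        ((k : ℝ) - 1) / ((k : ℝ) ^ (n + 1) - 1) *
          (({φ ∈ Set.Ioc φ1 φ2 | ∃ m : ℤ,
              (Blift φ t k)^[n] φ = Real.pi + 2 * Real.pi * m}).ncard : ℝ) -
        ((k : ℝ) - 1) / (((k : ℝ) + 1) * (k : ℝ) ^ n - 2) *
          (({φ ∈ Set.Ioc φ1 φ2 | ∃ m : ℤ,
              Blift φ t (k + 1) ((Blift φ t k)^[n - 1] φ) =
                Real.pi + 2 * Real.pi * m}).ncard : ℝ))
      Filter.atTop (nhds 0) := by
  have hk' : (2 : ℝ) ≤ k := by exact_mod_cast hk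
  set C := (|φ1| + (k * Real.pi + |φ1|)) + (|φ2| + (k * Real.pi + |φ2|)) with hC
  have hlim : Filter.Tendsto (fun n : ℕ => (C + 2 + (φ2 - φ1)) / (k : ℝ) ^ n)
      Filter.atTop (nhds 0) :=
    (tendsto_pow_atTop_atTop_of_one_lt (by linarith)).const_div_atTop _
  refine squeeze_zero_norm' ?_ hlim
  filter_upwards [Filter.eventually_ge_atTop 1] with n hn
  obtain ⟨n, rfl⟩ : ∃ m, n = m + 1 := ⟨n - 1, by omega⟩
  rw [Nat.add_sub_cancel, Real.norm_eq_abs, pow_succ' _ (n + 1)]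
  have hG := Gn_mono ht0 ht1 k (n + 1)
  have hE : ∀ φ, Blift φ t (k + 1) ((Blift φ t k)^[n] φ) =
      ((k : ℝ) + 1) / k * (Gn t k (n + 1) φ - φ) + φ := by
    intro φ
    rw [Blift_eq, Gn_succ]
    have : (k : ℝ) ≠ 0 := by linarith
    push_cast
    simp only [Gn]
    field_simp
    ring
  have hg := Gn_mono ht0 ht1 k n
  have hm2 : StrictMono (fun φ => Blift φ t (k + 1) ((Blift φ t k)^[n] φ)) := by
    intro a b hab
    have := mul_le_mul_of_nonneg_left ((hlift_strictMono ht0 ht1).monotone (hg.1 hab).le)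
        (Nat.cast_nonneg (α := ℝ) (k + 1))
    simp only [Blift_eq _ _ (k + 1)]
    simp only [Gn] at this
    linarith
  have hc2 : Continuous (fun φ => Blift φ t (k + 1) ((Blift φ t k)^[n] φ)) := by
    simp only [hE]
    have := hG.2
    fun_prop
  have c1 := count_bound _ hG.1 hG.2 φ1 φ2 hφ12
  have c2 := count_bound _ hm2 hc2 φ1 φ2 hφ12
  refine final_bound k _ _ _ (Gn t k (n + 1) φ2 - Gn t k (n + 1) φ1) (φ2 - φ1) C (2 * Real.pi) hk'
    (one_le_pow₀ (by linarith)) (by linarith) (by linarith [Real.pi_gt_three]) ?_ c1 ?_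
  · have b1 := Gn_bound (t := t) k hk φ1 (n + 1)
    have b2 := Gn_bound (t := t) k hk φ2 (n + 1)
    have q1 : 0 ≤ k * Real.pi + |φ1| := by positivity
    have q2 : 0 ≤ k * Real.pi + |φ2| := by positivity
    have := abs_sub (Gn t k (n + 1) φ2) (Gn t k (n + 1) φ1)
    rw [hC]
    nlinarith
  · have : (fun φ => Blift φ t (k + 1) ((Blift φ t k)^[n] φ)) φ2 -
        (fun φ => Blift φ t (k + 1) ((Blift φ t k)^[n] φ)) φ1 =
        ((k : ℝ) + 1) / k * ((Gn t k (n + 1) φ2 - Gn t k (n + 1) φ1) - (φ2 - φ1)) + (φ2 - φ1) := by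
      simp only [hE]; ring
    rw [← this]
    exact c2
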